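/- For every q > 0: ∫_ℝ q·e^{−2q|w|} · ln( cosh w ) dw = (1/2) · [ 1/q − ψ(q/2 + 1) + ψ((q + 1)/2) ], where ψ denotes the digamma function, ψ(x) := deriv (fun x => Real.log (Real.Gamma x)) x, i.e. the logarithmic derivative of the Gamma function. In particular, for q = 1 the integral equals ln 2 − 1/2. -/

import Mathlib

/-- The digamma function: the logarithmic derivative of the Gamma function. -/
noncomputable def digamma (x : ℝ) : ℝ :=
  deriv (fun x => Real.log (Real.Gamma x)) x

/-!
Integrating by parts turns the expectation into the Laplace transform
`J s = ∫₀^∞ e^{-sw} tanh w dw` at `s = 2q`. The identity `tanh w * (1 + e^{-2w}) = 1 - e^{-2w}`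
gives the functional equation `J s + J (s + 2) = 1 / s - 1 / (s + 2)`, and the recurrence
`ψ (x + 1) = ψ x + 1 / x` shows that `(ψ (s / 4 + 1 / 2) - ψ (s / 4)) / 2 - 1 / s` satisfies the
same equation. Both functions tend to `0` at infinity, the second one because convexity of
`log Γ` makes `ψ` monotone, and the equation has at most one solution with this property: the
difference of two solutions changes sign under `s ↦ s + 2`, hence is `4`-periodic.
-/

open MeasureTheory Set Filter Topology Real

lemma periodic_nat_eq_of_tendsto {α : Type*} [TopologicalSpace α] [T2Space α] {u : ℕ → α} {c : ℕ}
    {a : α} (hu : Function.Periodic u c) (hc : 0 < c) (ha : Tendsto u atTop (𝓝 a)) (n : ℕ) :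
    u n = a := by
  have hsub : Tendsto (fun k : ℕ => n + k * c) atTop atTop :=
    tendsto_atTop_mono
      (fun k => (Nat.le_mul_of_pos_right k hc).trans (Nat.le_add_left _ n)) tendsto_id
  refine tendsto_nhds_unique ?_ (ha.comp hsub)
  exact tendsto_const_nhds.congr fun k => ((hu.nat_mul k) n).symm

lemma eq_of_add_comp_add_const_eq {E : Type*} [AddCommGroup E] [TopologicalSpace E]
    [IsTopologicalAddGroup E] [T2Space E] {f g : ℝ → E} {a c x : ℝ} (hc : 0 < c)
    (hf : Tendsto f atTop (𝓝 0)) (hg : Tendsto g atTop (𝓝 0))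
    (hfg : ∀ y, a < y → f y + f (y + c) = g y + g (y + c)) (hx : a < x) : f x = g x := by
  let u : ℕ → E := fun n => f (x + n * c) - g (x + n * c)
  have hu : Function.Antiperiodic u 1 := fun n => by
    have h := hfg (x + n * c) (lt_add_of_lt_of_nonneg hx (by positivity))
    have hn : x + (n + 1 : ℕ) * c = x + n * c + c := by push_cast; ring
    simp only [u, hn]
    rw [← sub_eq_zero] at h ⊢
    rw [← h]
    abel
  have hlim : Tendsto u atTop (𝓝 0) := by
    have hseq : Tendsto (fun n : ℕ => x + n * c) atTop atTop :=
      tendsto_atTop_add_const_left _ _ (tendsto_natCast_atTop_atTop.atTop_mul_const hc)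
    simpa using (hf.comp hseq).sub (hg.comp hseq)
  have h0 : u 0 = 0 := periodic_nat_eq_of_tendsto hu.periodic_two_mul (by norm_num) hlim 0
  simpa [u, sub_eq_zero] using h0

lemma integral_exp_neg_mul_smul_deriv {E : Type*} [NormedAddCommGroup E] [NormedSpace ℝ E]
    [CompleteSpace E] {f f' : ℝ → E} {a s : ℝ} (hcont : ContinuousWithinAt f (Ici a) a)
    (hderiv : ∀ w ∈ Ioi a, HasDerivAt f (f' w) w)
    (hf : IntegrableOn (fun w => exp (-s * w) • f w) (Ioi a))
    (hf' : IntegrableOn (fun w => exp (-s * w) • f' w) (Ioi a)) :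
    ∫ w in Ioi a, exp (-s * w) • f' w =
      s • (∫ w in Ioi a, exp (-s * w) • f w) - exp (-s * a) • f a := by
  have hderiv_smul : ∀ w ∈ Ioi a, HasDerivAt (fun w => exp (-s * w) • f w)
      (exp (-s * w) • f' w - s • exp (-s * w) • f w) w := fun w hw => by
    have hexp : HasDerivAt (fun w => exp (-s * w)) (exp (-s * w) * -s) w := by
      simpa using ((hasDerivAt_id w).const_mul (-s)).exp
    exact (hexp.smul (hderiv w hw)).congr_deriv (by module)
  have hint : IntegrableOn (fun w => exp (-s * w) • f' w - s • exp (-s * w) • f w) (Ioi a) :=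
    hf'.sub (hf.smul s)
  have hlim := tendsto_zero_of_hasDerivAt_of_integrableOn_Ioi hderiv_smul hint hf
  have hcont_smul : ContinuousWithinAt (fun w => exp (-s * w) • f w) (Ici a) a :=
    (by fun_prop : Continuous fun w => exp (-s * w)).continuousWithinAt.smul hcont
  have hparts := integral_Ioi_of_hasDerivAt_of_tendsto hcont_smul hderiv_smul hint hlim
  rw [integral_sub hf' (hf.fun_smul s), integral_smul] at hparts
  rw [sub_eq_iff_eq_add.1 hparts]
  abel

section Digamma

lemma differentiableAt_log_Gamma {x : ℝ} (hx : 0 < x) :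
    DifferentiableAt ℝ (fun x => log (Gamma x)) x :=
  (differentiableAt_Gamma fun m => by linarith [m.cast_nonneg (α := ℝ)]).log
    (Gamma_pos_of_pos hx).ne'

lemma digamma_add_one {x : ℝ} (hx : 0 < x) : digamma (x + 1) = digamma x + 1 / x := by
  have hshift : HasDerivAt (fun y => log (Gamma (y + 1))) (digamma (x + 1)) x :=
    (differentiableAt_log_Gamma (by positivity)).hasDerivAt.comp_add_const x 1
  have hsum : HasDerivAt (fun y => log (Gamma y) + log y) (digamma x + 1 / x) x := by
    simpa only [one_div] using!
      (differentiableAt_log_Gamma hx).hasDerivAt.add (hasDerivAt_log hx.ne')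
  refine hshift.unique (hsum.congr_of_eventuallyEq ?_)
  filter_upwards [lt_mem_nhds hx] with y hy
  rw [Gamma_add_one hy.ne', log_mul hy.ne' (Gamma_pos_of_pos hy).ne', add_comm]

lemma monotoneOn_digamma : MonotoneOn digamma (Ioi 0) :=
  convexOn_log_Gamma.monotoneOn_deriv fun _ hx => differentiableAt_log_Gamma hx

lemma digamma_one : digamma 1 = -eulerMascheroniConstant := by
  simpa [digamma] using (hasDerivAt_Gamma_one.log (by simp)).deriv

lemma digamma_one_half : digamma (1 / 2) = -(eulerMascheroniConstant + 2 * log 2) := by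
  have hsqrt : √π ≠ 0 := (sqrt_pos.2 pi_pos).ne'
  rw [digamma, (hasDerivAt_Gamma_one_half.log (Gamma_one_half_eq ▸ hsqrt)).deriv,
    Gamma_one_half_eq]
  field_simp

lemma tendsto_digamma_add_sub_digamma {a : ℝ} (ha : a ∈ Icc 0 1) :
    Tendsto (fun x => digamma (x + a) - digamma x) atTop (𝓝 0) := by
  obtain ⟨ha0, ha1⟩ := ha
  refine tendsto_of_tendsto_of_tendsto_of_le_of_le' tendsto_const_nhds
    tendsto_inv_atTop_zero ?_ ?_
  all_goals filter_upwards [eventually_gt_atTop 0] with x hx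
  · exact sub_nonneg.2 (monotoneOn_digamma (mem_Ioi.2 hx) (mem_Ioi.2 (by positivity))
      (by linarith))
  · calc digamma (x + a) - digamma x ≤ digamma (x + 1) - digamma x := by
          gcongr
          exact monotoneOn_digamma (mem_Ioi.2 (by positivity)) (mem_Ioi.2 (by positivity))
            (by linarith)
      _ = x⁻¹ := by rw [digamma_add_one hx]; ring

end Digamma

section Hyperbolic

lemma continuous_tanh : Continuous tanh := by
  simp only [funext tanh_eq_sinh_div_cosh]
  exact continuous_sinh.div continuous_cosh fun w => (cosh_pos w).ne'

lemma tanh_nonneg {w : ℝ} (hw : 0 ≤ w) : 0 ≤ tanh w := by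
  rw [tanh_eq_sinh_div_cosh]
  exact div_nonneg (sinh_nonneg_iff.2 hw) (cosh_pos w).le

lemma tanh_mul_one_add_exp (w : ℝ) : tanh w * (1 + exp (-2 * w)) = 1 - exp (-2 * w) := by
  have hexp : exp (-2 * w) = exp (-w) / exp w := by rw [← exp_sub]; ring_nf
  rw [tanh_eq, hexp]
  field_simp

lemma hasDerivAt_log_cosh (w : ℝ) : HasDerivAt (fun w => log (cosh w)) (tanh w) w := by
  rw [tanh_eq_sinh_div_cosh]
  exact (hasDerivAt_cosh w).log (cosh_pos w).ne'

lemma log_cosh_nonneg (w : ℝ) : 0 ≤ log (cosh w) :=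
  log_nonneg (one_le_cosh w)

lemma log_cosh_le_abs (w : ℝ) : log (cosh w) ≤ |w| := by
  rw [log_le_iff_le_exp (cosh_pos w), ← cosh_abs, ← cosh_add_sinh]
  exact le_add_of_nonneg_right (sinh_nonneg_iff.2 (abs_nonneg w))

end Hyperbolic

section LaplaceTransform

variable {s : ℝ}

lemma integral_exp_neg_mul_Ioi_zero (hs : 0 < s) : ∫ w in Ioi (0 : ℝ), exp (-s * w) = 1 / s := by
  rw [integral_exp_mul_Ioi (neg_lt_zero.2 hs)]
  simp

lemma integrableOn_exp_neg_mul_tanh (hs : 0 < s) :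
    IntegrableOn (fun w => exp (-s * w) * tanh w) (Ioi 0) :=
  (exp_neg_integrableOn_Ioi 0 hs).mul_bdd (c := 1) continuous_tanh.aestronglyMeasurable
    (ae_of_all _ fun w => (abs_tanh_lt_one w).le)

lemma integrableOn_exp_neg_mul_log_cosh (hs : 0 < s) :
    IntegrableOn (fun w => exp (-s * w) * log (cosh w)) (Ioi 0) := by
  have hdom : IntegrableOn (fun w => w * exp (-s * w)) (Ioi 0) := by
    simpa using integrableOn_rpow_mul_exp_neg_mul_rpow (s := 1) (by norm_num) one_pos hs
  have hcont : Continuous fun w => exp (-s * w) * log (cosh w) :=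
    (by fun_prop : Continuous fun w => exp (-s * w)).mul
      (continuous_cosh.log fun w => (cosh_pos w).ne')
  refine hdom.mono' hcont.aestronglyMeasurable <|
    (ae_restrict_iff' measurableSet_Ioi).2 (ae_of_all _ fun w hw => ?_)
  rw [norm_of_nonneg (mul_nonneg (exp_pos _).le (log_cosh_nonneg w)), mul_comm]
  gcongr
  exact (log_cosh_le_abs w).trans_eq (abs_of_pos hw)

/-- The Laplace transform of `tanh`, to which integration by parts reduces the Laplace transform
of `log ∘ cosh`. It is meaningful for `0 < s`; elsewhere the integral diverges and has the junk
value `0`. -/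
noncomputable def laplaceTanh (s : ℝ) : ℝ :=
  ∫ w in Ioi (0 : ℝ), exp (-s * w) * tanh w

lemma mul_integral_exp_neg_mul_log_cosh (hs : 0 < s) :
    s * ∫ w in Ioi (0 : ℝ), exp (-s * w) * log (cosh w) = laplaceTanh s := by
  have hparts := integral_exp_neg_mul_smul_deriv
    (hasDerivAt_log_cosh 0).continuousAt.continuousWithinAt (fun w _ => hasDerivAt_log_cosh w)
    (integrableOn_exp_neg_mul_log_cosh hs) (integrableOn_exp_neg_mul_tanh hs)
  simpa [laplaceTanh] using hparts.symm

lemma laplaceTanh_add_laplaceTanh_add_two (hs : 0 < s) :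
    laplaceTanh s + laplaceTanh (s + 2) = 1 / s - 1 / (s + 2) := by
  have hs2 : 0 < s + 2 := by positivity
  rw [laplaceTanh, laplaceTanh,
    ← integral_add (integrableOn_exp_neg_mul_tanh hs) (integrableOn_exp_neg_mul_tanh hs2),
    ← integral_exp_neg_mul_Ioi_zero hs, ← integral_exp_neg_mul_Ioi_zero hs2,
    ← integral_sub (exp_neg_integrableOn_Ioi 0 hs) (exp_neg_integrableOn_Ioi 0 hs2)]
  congr 1 with w
  have hexp : exp (-(s + 2) * w) = exp (-s * w) * exp (-2 * w) := by rw [← exp_add]; ring_nf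
  rw [hexp]
  linear_combination exp (-s * w) * tanh_mul_one_add_exp w

lemma laplaceTanh_nonneg (s : ℝ) : 0 ≤ laplaceTanh s :=
  setIntegral_nonneg measurableSet_Ioi fun _ hw =>
    mul_nonneg (exp_pos _).le (tanh_nonneg (le_of_lt hw))

lemma laplaceTanh_le_one_div (hs : 0 < s) : laplaceTanh s ≤ 1 / s := by
  rw [← integral_exp_neg_mul_Ioi_zero hs]
  exact setIntegral_mono (integrableOn_exp_neg_mul_tanh hs) (exp_neg_integrableOn_Ioi 0 hs)
    fun w => mul_le_of_le_one_right (exp_pos _).le (tanh_lt_one w).le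

lemma tendsto_laplaceTanh_atTop : Tendsto laplaceTanh atTop (𝓝 0) := by
  refine squeeze_zero' (Eventually.of_forall laplaceTanh_nonneg) ?_
    (tendsto_const_nhds.div_atTop tendsto_id : Tendsto (fun s : ℝ => 1 / s) atTop (𝓝 0))
  filter_upwards [eventually_gt_atTop 0] with s hs using laplaceTanh_le_one_div hs

lemma laplaceTanh_eq_digamma (hs : 0 < s) :
    laplaceTanh s = (digamma (s / 4 + 1 / 2) - digamma (s / 4)) / 2 - 1 / s := by
  refine eq_of_add_comp_add_const_eq (a := 0) two_pos tendsto_laplaceTanh_atTop ?_ ?_ hs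
    (g := fun s => (digamma (s / 4 + 1 / 2) - digamma (s / 4)) / 2 - 1 / s)
  · have hdigamma := (tendsto_digamma_add_sub_digamma (a := 1 / 2) (by norm_num)).comp
      (tendsto_id.atTop_div_const (four_pos : (0 : ℝ) < 4))
    simpa using (hdigamma.div_const 2).sub tendsto_inv_atTop_zero
  · intro t ht
    have hshift : (t + 2) / 4 = t / 4 + 1 / 2 := by ring
    have hshift' : t / 4 + 1 / 2 + 1 / 2 = t / 4 + 1 := by ring
    rw [laplaceTanh_add_laplaceTanh_add_two ht, hshift, hshift',
      digamma_add_one (by positivity)]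
    field_simp
    ring

end LaplaceTransform

lemma integral_mul_exp_neg_abs_mul_log_cosh {q : ℝ} (hq : 0 < q) :
    ∫ w : ℝ, q * exp (-(2 * q * |w|)) * log (cosh w) =
      (1 / 2) * (1 / q - digamma (q / 2 + 1) + digamma ((q + 1) / 2)) := by
  calc ∫ w : ℝ, q * exp (-(2 * q * |w|)) * log (cosh w)
      = 2 * ∫ w in Ioi (0 : ℝ), q * (exp (-(2 * q) * w) * log (cosh w)) := by
        rw [← integral_comp_abs]
        simp only [cosh_abs, neg_mul, mul_assoc]
    _ = 2 * q * ∫ w in Ioi (0 : ℝ), exp (-(2 * q) * w) * log (cosh w) := by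
        rw [integral_const_mul, mul_assoc]
    _ = laplaceTanh (2 * q) := mul_integral_exp_neg_mul_log_cosh (by positivity)
    _ = (digamma ((q + 1) / 2) - digamma (q / 2)) / 2 - 1 / (2 * q) := by
        rw [laplaceTanh_eq_digamma (by positivity)]
        ring_nf
    _ = (1 / 2) * (1 / q - digamma (q / 2 + 1) + digamma ((q + 1) / 2)) := by
        rw [digamma_add_one (by positivity)]
        field_simp
        ring

/-- **Expectation of `ln cosh` under the Laplace law.**
For every `q > 0`,
`∫_ℝ q e^{-2q|w|} ln(cosh w) dw = ½ [1/q - ψ(q/2+1) + ψ((q+1)/2)]`;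
in particular, for `q = 1` the integral equals `ln 2 - 1/2`. -/
theorem laplace_expectation_log_cosh :
    (∀ q : ℝ, 0 < q →
      ∫ w : ℝ, q * Real.exp (-(2 * q * |w|)) * Real.log (Real.cosh w) =
        (1 / 2) * (1 / q - digamma (q / 2 + 1) + digamma ((q + 1) / 2))) ∧
    (∫ w : ℝ, (1:ℝ) * Real.exp (-(2 * 1 * |w|)) * Real.log (Real.cosh w) =
      Real.log 2 - 1 / 2) := by
  refine ⟨fun q hq => integral_mul_exp_neg_abs_mul_log_cosh hq, ?_⟩
  rw [integral_mul_exp_neg_abs_mul_log_cosh one_pos, digamma_add_one one_half_pos, add_self_div_two,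
    digamma_one, digamma_one_half]
  ring
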